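/- arXiv:1403.3866 — 4 statements merged into one kernel-verified Lean document; each statement's English description precedes it below -/
import Mathlib

section
/- There exists s = (s_1, …, s_n) with all s_i real and strictly positive such that the complex matrix T(s) has n pairwise distinct eigenvalues, i.e. its characteristic polynomial has n distinct complex roots. -/
/-- For `s : Fin n → ℂ`, the complex `n × n` matrix `T(s)` with `T(s) i i = 0`,
`T(s) i j = s j` for `i < j` and `T(s) i j = -s j` for `i > j`
(the specialization `x_i = s_i` of the matrix `T` over `ℂ[x_1, …, x_n]`). -/
def Tmat (n : ℕ) (s : Fin n → ℂ) : Matrix (Fin n) (Fin n) ℂ :=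
  fun i j => if i = j then 0 else if i < j then s j else -s j

/-- The partial row sums of the sign matrix against a geometric progression telescope after
multiplication by `1 - z`. -/
theorem one_sub_mul_sum_range_sign_mul_pow {R : Type*} [CommRing R] (z : R) (i m : ℕ) :
    (1 - z) * ∑ j ∈ Finset.range m, (if i = j then 0 else if i < j then 1 else -1) * z ^ j =
      if m ≤ i then z ^ m - 1 else z ^ i * (1 + z) - z ^ m - 1 := by
  induction m with
  | zero => simp
  | succ m ih =>
    rw [Finset.sum_range_succ, mul_add, ih]
    rcases lt_trichotomy i m with h | h | h
    · rw [if_neg (by omega), if_neg (by omega), if_pos h, if_neg (by omega)]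
      ring
    · subst h
      simp
      ring
    · rw [if_pos (by omega), if_neg (by omega), if_neg (by omega), if_pos (by omega)]
      ring

/-- The matrix `T(1, …, 1)` is skew-circulant: each `z` with `z ^ n = -1` yields the eigenvalue
`(1 + z) / (1 - z)`, with eigenvector `(1, z, …, z ^ (n - 1))`. -/
theorem Tmat_one_mulVec_pow (n : ℕ) {z : ℂ} (hz : z ^ n = -1) (hz1 : z ≠ 1) :
    (Tmat n fun _ => 1).mulVec (fun j => z ^ (j : ℕ)) =
      ((1 + z) / (1 - z)) • fun j : Fin n => z ^ (j : ℕ) := by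
  have h1 : 1 - z ≠ 0 := sub_ne_zero.mpr hz1.symm
  funext i
  have h := one_sub_mul_sum_range_sign_mul_pow z i n
  rw [if_neg (by have := i.isLt; omega), hz, ← Fin.sum_univ_eq_sum_range
    (fun j => (if (i : ℕ) = j then (0 : ℂ) else if (i : ℕ) < j then 1 else -1) * z ^ j)] at h
  have hsum : (Tmat n fun _ => 1).mulVec (fun j => z ^ (j : ℕ)) i =
      ∑ j : Fin n, (if (i : ℕ) = j then (0 : ℂ) else if (i : ℕ) < j then 1 else -1) * z ^ (j : ℕ) := by
    simp only [Matrix.mulVec, dotProduct, Tmat, Fin.ext_iff, Fin.lt_def]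
  rw [hsum, Pi.smul_apply, smul_eq_mul]
  field_simp
  linear_combination h

/-- Over `ℂ`, a nonzero number has `n` distinct `n`-th roots. -/
theorem card_toFinset_nthRoots (n : ℕ) (hn : n ≠ 0) {a : ℂ} (ha : a ≠ 0) :
    (Polynomial.nthRoots n a).toFinset.card = n := by
  have hω := Complex.isPrimitiveRoot_exp n hn
  rw [Multiset.toFinset_card_of_nodup (hω.nthRoots_nodup ha), hω.card_nthRoots,
    if_pos (IsAlgClosed.exists_pow_nat_eq a (Nat.pos_of_ne_zero hn))]

/-- There exists `s` with all entries real and strictly positive such that `T(s)` has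
`n` pairwise distinct eigenvalues, i.e. its characteristic polynomial has `n` distinct
complex roots. -/
theorem exists_pos_real_distinct_eigenvalues (n : ℕ) (hn : 1 ≤ n) :
    ∃ s : Fin n → ℝ, (∀ i, 0 < s i) ∧
      ((Tmat n (fun i => (s i : ℂ))).charpoly.roots.toFinset.card = n) := by
  refine ⟨fun _ => 1, fun _ => one_pos, ?_⟩
  simp only [Complex.ofReal_one]
  set M := Tmat n fun _ => 1
  have hroot {z : ℂ} (hz : z ∈ (Polynomial.nthRoots n (-1 : ℂ)).toFinset) : z ^ n = -1 :=
    (Polynomial.mem_nthRoots hn).mp (Multiset.mem_toFinset.mp hz)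
  have hne {z : ℂ} (hz : z ^ n = -1) : z ≠ 1 := by
    rintro rfl
    norm_num at hz
  apply le_antisymm
  · calc _ ≤ M.charpoly.roots.card := Multiset.toFinset_card_le _
      _ ≤ M.charpoly.natDegree := M.charpoly.card_roots'
      _ = n := by rw [M.charpoly_natDegree_eq_dim, Fintype.card_fin]
  · conv_lhs => rw [← card_toFinset_nthRoots n (by omega) (neg_ne_zero.mpr one_ne_zero)]
    refine Finset.card_le_card_of_injOn (fun z => (1 + z) / (1 - z)) (fun z hz => ?_)
      fun z hz w hw hzw => ?_
    · have hzn := hroot hz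
      have hev : Module.End.HasEigenvalue (Matrix.toLin' M) ((1 + z) / (1 - z)) :=
        Module.End.hasEigenvalue_of_hasEigenvector (x := fun j : Fin n => z ^ (j : ℕ))
          ⟨Module.End.mem_eigenspace_iff.mpr (Tmat_one_mulVec_pow n hzn (hne hzn)),
            fun h => by simpa using congrFun h ⟨0, hn⟩⟩
      rw [Finset.mem_coe, Multiset.mem_toFinset, Polynomial.mem_roots M.charpoly_monic.ne_zero,
        ← Matrix.charpoly_toLin']
      exact (Module.End.hasEigenvalue_iff_isRoot_charpoly _ _).mp hev
    · have h1 : 1 - z ≠ 0 := sub_ne_zero.mpr (hne (hroot hz)).symm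
      have h2 : 1 - w ≠ 0 := sub_ne_zero.mpr (hne (hroot hw)).symm
      have h := (div_eq_div_iff h1 h2).mp hzw
      linear_combination h / 2
end

section
/- For every s = (s_1, …, s_n) with all s_i real and strictly positive, every eigenvalue of the complex matrix T(s) is purely imaginary, i.e. has real part equal to zero. -/
/-- `diag(s) * T(s)` is skew-symmetric. -/
theorem mul_Tmat_eq_neg (n : ℕ) (s : Fin n → ℂ) (i j : Fin n) :
    s i * Tmat n s i j = -(s j * Tmat n s j i) := by
  rcases lt_trichotomy i j with h | rfl | h
  · simp [Tmat, h, h.ne, h.ne', h.not_gt, mul_comm]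
  · simp [Tmat]
  · simp [Tmat, h, h.ne, h.ne', h.not_gt, mul_comm]

theorem Tmat_ofReal_im (n : ℕ) (s : Fin n → ℝ) (i j : Fin n) :
    (Tmat n (fun k => (s k : ℂ)) i j).im = 0 := by
  unfold Tmat
  split_ifs <;> simp

/-- The form `v ↦ ∑ i, s i * conj (v i) * (T(s) v) i` takes purely imaginary values. -/
theorem re_sum_conj_mul_Tmat_mulVec (n : ℕ) (s : Fin n → ℝ) (v : Fin n → ℂ) :
    (∑ i, (s i : ℂ) * star (v i) * (Tmat n (fun k => (s k : ℂ))).mulVec v i).re = 0 := by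
  set T := Tmat n (fun k => (s k : ℂ)) with hT
  have hskew : ∀ i j, ((s i : ℂ) * star (v i) * (T i j * v j)).re =
      -((s j : ℂ) * star (v j) * (T j i * v i)).re := by
    intro i j
    have h := congrArg Complex.re (mul_Tmat_eq_neg n (fun k => (s k : ℂ)) i j)
    have hij := Tmat_ofReal_im n s i j
    have hji := Tmat_ofReal_im n s j i
    rw [← hT] at h hij hji
    simp only [Complex.mul_re, Complex.mul_im, Complex.neg_re, Complex.ofReal_re,
      Complex.ofReal_im, Complex.star_def, Complex.conj_re, Complex.conj_im, hij, hji] at h ⊢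
    linear_combination ((v i).re * (v j).re + (v i).im * (v j).im) * h
  have hsum : (∑ i, (s i : ℂ) * star (v i) * T.mulVec v i).re =
      ∑ i, ∑ j, ((s i : ℂ) * star (v i) * (T i j * v j)).re := by
    simp only [Matrix.mulVec, dotProduct, Finset.mul_sum, Complex.re_sum]
  have hneg : ∑ i, ∑ j, ((s i : ℂ) * star (v i) * (T i j * v j)).re =
      -∑ i, ∑ j, ((s i : ℂ) * star (v i) * (T i j * v j)).re := by
    conv_lhs => rw [Finset.sum_comm]
    simp only [← Finset.sum_neg_distrib]
    exact Finset.sum_congr rfl fun i _ => Finset.sum_congr rfl fun j _ => hskew j i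
  rw [hsum]
  linarith

/-- For every `s` with all entries real and strictly positive, every eigenvalue of `T(s)`
is purely imaginary. -/
theorem eigenvalues_purely_imaginary (n : ℕ) (hn : 1 ≤ n) (s : Fin n → ℝ)
    (hs : ∀ i, 0 < s i) (a : ℂ) (v : Fin n → ℂ) (hv : v ≠ 0)
    (hav : (Tmat n (fun i => (s i : ℂ))).mulVec v = a • v) :
    a.re = 0 := by
  have h := re_sum_conj_mul_Tmat_mulVec n s v
  have hform : (∑ i, (s i : ℂ) * star (v i) * (a • v) i).re =
      a.re * ∑ i, s i * Complex.normSq (v i) := by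
    rw [Complex.re_sum, Finset.mul_sum]
    refine Finset.sum_congr rfl fun i _ => ?_
    simp only [Pi.smul_apply, smul_eq_mul, Complex.mul_re, Complex.mul_im, Complex.ofReal_re,
      Complex.ofReal_im, Complex.star_def, Complex.conj_re, Complex.conj_im,
      Complex.normSq_apply]
    ring
  rw [hav, hform] at h
  obtain ⟨k, hk⟩ := Function.ne_iff.mp hv
  have hpos : 0 < ∑ i, s i * Complex.normSq (v i) :=
    Finset.sum_pos' (fun i _ => mul_nonneg (hs i).le (Complex.normSq_nonneg _))
      ⟨k, Finset.mem_univ k, mul_pos (hs k) (Complex.normSq_pos.mpr hk)⟩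
  exact (mul_eq_zero.mp h).resolve_right hpos.ne'
end

section
/- Let s = (s_1, …, s_n) have all entries real and strictly positive, let v ∈ ℂ^n and a ∈ ℂ satisfy T(s)·v = a·v. If Σ_{i=1}^n s_i·v_i = 0, then v = 0. In other words, no nonzero eigenvector of T(s) is H_s-orthogonal to the vector (1, 1, …, 1). -/
/-- If `Σ_j s_j v_j = 0` and `v` vanishes before `i`, then `(T(s) v)_i = -s_i v_i`. -/
theorem Tmat_mulVec_of_forall_lt {n : ℕ} {s v : Fin n → ℂ} (h : ∑ j, s j * v j = 0)
    {i : Fin n} (hi : ∀ j < i, v j = 0) : (Tmat n s).mulVec v i = -s i * v i := by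
  have key : ∀ j, Tmat n s i j * v j = s j * v j - if i = j then s j * v j else 0 := by
    intro j
    rcases lt_trichotomy i j with hij | rfl | hij
    · simp [Tmat, hij, hij.ne]
    · simp [Tmat]
    · simp [hi j hij]
  simp only [Matrix.mulVec, dotProduct, key, Finset.sum_sub_distrib, h]
  simp

/-- If `Σ_j s_j v_j = 0` and `v` vanishes after `i`, then `(T(s) v)_i = s_i v_i`. -/
theorem Tmat_mulVec_of_forall_gt {n : ℕ} {s v : Fin n → ℂ} (h : ∑ j, s j * v j = 0)
    {i : Fin n} (hi : ∀ j, i < j → v j = 0) : (Tmat n s).mulVec v i = s i * v i := by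
  have key : ∀ j, Tmat n s i j * v j = (if i = j then s j * v j else 0) - s j * v j := by
    intro j
    rcases lt_trichotomy i j with hij | rfl | hij
    · simp [hi j hij]
    · simp [Tmat]
    · simp [Tmat, hij.not_gt, hij.ne']
  simp only [Matrix.mulVec, dotProduct, key, Finset.sum_sub_distrib, h]
  simp

/-- If `s` has all entries real and strictly positive, `v` is an eigenvector of `T(s)`
(with any eigenvalue `a`) and `Σ_i s_i v_i = 0`, then `v = 0`; i.e. no nonzero
eigenvector of `T(s)` is `H_s`-orthogonal to `(1, …, 1)`. -/
theorem eigenvector_not_orthogonal_to_ones (n : ℕ) (hn : 1 ≤ n) (s : Fin n → ℝ)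
    (hs : ∀ i, 0 < s i) (v : Fin n → ℂ) (a : ℂ)
    (hav : (Tmat n (fun i => (s i : ℂ))).mulVec v = a • v)
    (horth : ∑ i : Fin n, (s i : ℂ) * v i = 0) :
    v = 0 := by
  by_contra hv
  obtain ⟨k, hk⟩ := Function.ne_iff.mp hv
  have hne : (Finset.univ.filter fun i => v i ≠ 0).Nonempty := ⟨k, by simpa using hk⟩
  obtain ⟨p, hp, hpmin⟩ := Finset.exists_min_image _ id hne
  obtain ⟨q, hq, hqmax⟩ := Finset.exists_max_image _ id hne
  simp only [Finset.mem_filter, Finset.mem_univ, true_and, id] at hp hq hpmin hqmax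
  have first := Tmat_mulVec_of_forall_lt horth (i := p) fun j hj =>
    by_contra fun h => (hpmin j h).not_gt hj
  have last := Tmat_mulVec_of_forall_gt horth (i := q) fun j hj =>
    by_contra fun h => (hqmax j h).not_gt hj
  rw [hav, Pi.smul_apply, smul_eq_mul] at first last
  have hsum : -(s p : ℂ) = s q :=
    (mul_right_cancel₀ hp first).symm.trans (mul_right_cancel₀ hq last)
  have hsum' : -s p = s q := by exact_mod_cast hsum
  linarith [hs p, hs q]
end

section
/- There exists s = (s_1, …, s_n) with all s_i real and strictly positive such that the n vectors w, T(s)·w, T(s)^2·w, …, T(s)^{n−1}·w, where w = (1, 1, …, 1) ∈ ℂ^n, are linearly independent over ℂ (equivalently, they form a basis of ℂ^n; i.e. w is a cyclic vector for T(s)). -/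
/-- The hockey-stick identity in complex form. -/
theorem sum_range_choose_cast (k m : ℕ) :
    ∑ j ∈ Finset.range m, (j.choose k : ℂ) = (m.choose (k + 1) : ℂ) := by
  induction m with
  | zero => simp
  | succ m ih => rw [Finset.sum_range_succ, ih, Nat.choose_succ_succ]; push_cast; ring

/-- The column vector of binomial coefficients `i ↦ i.choose k`. -/
def chooseVec (n k : ℕ) : Fin n → ℂ := fun i => ((i : ℕ).choose k : ℂ)

theorem Tmat_one_mulVec_chooseVec (n k : ℕ) :
    (Tmat n fun _ => 1).mulVec (chooseVec n k) =
      (n.choose (k + 1) : ℂ) • chooseVec n 0 - (2 : ℂ) • chooseVec n (k + 1) - chooseVec n k := by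
  ext i
  have hterm : ∀ j : Fin n, Tmat n (fun _ => 1) i j * chooseVec n k j =
      ((j : ℕ).choose k : ℂ) - 2 * (if (j : ℕ) < i then ((j : ℕ).choose k : ℂ) else 0)
        - (if i = j then ((j : ℕ).choose k : ℂ) else 0) := by
    intro j
    rcases lt_trichotomy i j with h | h | h
    · have h' : ¬ (j : ℕ) < i := not_lt.2 (Fin.lt_def.1 h).le
      simp [Tmat, chooseVec, h, h.ne, h']
    · subst h
      simp [Tmat, chooseVec]
    · have h' : (j : ℕ) < i := h
      simp only [Tmat, chooseVec, h.ne', h', not_lt.2 h.le, if_true, if_false]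
      ring
  have hlt : ∑ j : Fin n, (if (j : ℕ) < i then ((j : ℕ).choose k : ℂ) else 0) =
      ((i : ℕ).choose (k + 1) : ℂ) := by
    rw [Fin.sum_univ_eq_sum_range (fun j => if j < (i : ℕ) then (j.choose k : ℂ) else 0) n,
      ← Finset.sum_filter, ← sum_range_choose_cast]
    congr 1
    ext j
    have := i.isLt
    simp only [Finset.mem_filter, Finset.mem_range]
    omega
  simp only [Matrix.mulVec, dotProduct, hterm, Finset.sum_sub_distrib, ← Finset.mul_sum, hlt]
  rw [Fin.sum_univ_eq_sum_range (fun j => (j.choose k : ℂ)) n, sum_range_choose_cast]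
  simp [chooseVec]

theorem chooseVec_mem_span (n k : ℕ) :
    chooseVec n k ∈ Submodule.span ℂ
      ((fun j : ℕ => ((Tmat n fun _ => 1) ^ j).mulVec fun _ => (1 : ℂ)) '' Set.Iic k) := by
  have hmono : ∀ {k l : ℕ}, k ≤ l → Submodule.span ℂ
      ((fun j : ℕ => ((Tmat n fun _ => 1) ^ j).mulVec fun _ => (1 : ℂ)) '' Set.Iic k) ≤
      Submodule.span ℂ
      ((fun j : ℕ => ((Tmat n fun _ => 1) ^ j).mulVec fun _ => (1 : ℂ)) '' Set.Iic l) :=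
    fun h => Submodule.span_mono (Set.image_mono (Set.Iic_subset_Iic.2 h))
  have hzero : chooseVec n 0 ∈ Submodule.span ℂ
      ((fun j : ℕ => ((Tmat n fun _ => 1) ^ j).mulVec fun _ => (1 : ℂ)) '' Set.Iic 0) :=
    Submodule.subset_span ⟨0, by simp, by ext; simp [chooseVec]⟩
  induction k with
  | zero => exact hzero
  | succ k ih =>
    have hT : (Tmat n fun _ => 1).mulVec (chooseVec n k) ∈ Submodule.span ℂ
        ((fun j : ℕ => ((Tmat n fun _ => 1) ^ j).mulVec fun _ => (1 : ℂ)) '' Set.Iic (k + 1)) := by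
      rw [← Matrix.mulVecLin_apply, ← Submodule.mem_comap]
      refine Submodule.span_le.2 ?_ ih
      rintro _ ⟨j, hj, rfl⟩
      refine Submodule.subset_span ⟨j + 1, Nat.succ_le_succ hj, ?_⟩
      simp [pow_succ', Matrix.mulVec_mulVec]
    have hrec : chooseVec n (k + 1) = (2⁻¹ : ℂ) • ((n.choose (k + 1) : ℂ) • chooseVec n 0 -
        chooseVec n k - (Tmat n fun _ => 1).mulVec (chooseVec n k)) := by
      rw [Tmat_one_mulVec_chooseVec]
      module
    rw [hrec]
    exact Submodule.smul_mem _ _ (Submodule.sub_mem _ (Submodule.sub_mem _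
      (Submodule.smul_mem _ _ (hmono (Nat.zero_le _) hzero)) (hmono k.le_succ ih)) hT)

theorem linearIndependent_chooseVec (n : ℕ) :
    LinearIndependent ℂ fun k : Fin n => chooseVec n k := by
  have hdet : (Matrix.of fun i k : Fin n => chooseVec n k i).det = 1 := by
    rw [Matrix.det_of_isLowerTriangular]
    · simp [chooseVec]
    · intro i k h
      have h' : (i : ℕ) < k := h
      simp [chooseVec, Nat.choose_eq_zero_of_lt h']
  exact Matrix.linearIndependent_cols_iff_isUnit.2
    ((Matrix.isUnit_iff_isUnit_det _).2 (hdet ▸ isUnit_one))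

/-- There exists `s` with all entries real and strictly positive such that the `n` vectors
`w, T(s)w, T(s)²w, …, T(s)^{n-1}w`, where `w = (1, …, 1)`, are linearly independent
over `ℂ`; i.e. `w` is a cyclic vector for `T(s)`. -/
theorem exists_pos_real_cyclic_ones (n : ℕ) (hn : 1 ≤ n) :
    ∃ s : Fin n → ℝ, (∀ i, 0 < s i) ∧
      LinearIndependent ℂ
        (fun k : Fin n =>
          ((Tmat n (fun i => (s i : ℂ))) ^ (k : ℕ)).mulVec (fun _ => (1 : ℂ))) := by
  refine ⟨fun _ => 1, fun _ => one_pos, ?_⟩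
  simp only [Complex.ofReal_one]
  refine linearIndependent_of_top_le_span_of_card_eq_finrank ?_ (by simp)
  rw [← (linearIndependent_chooseVec n).span_eq_top_of_card_eq_finrank' (by simp),
    Submodule.span_le]
  rintro _ ⟨k, rfl⟩
  refine Submodule.span_mono ?_ (chooseVec_mem_span n k)
  rintro _ ⟨j, hj, rfl⟩
  exact ⟨⟨j, lt_of_le_of_lt hj k.isLt⟩, rfl⟩
end
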